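/- arXiv:1304.1198 — 2 statements merged into one kernel-verified Lean document; each statement's English description precedes it below -/
import Mathlib

section
/- Let f : ℝⁿ → ℝ ∪ {+∞} be a symmetric convex polyhedral function, and let M be an open face (stratum) of the induced polyhedral stratification of dom f. Then for every point x ∈ M there is a neighborhood U of x with U ∩ M^sym = U ∩ M, where M^sym = ⋃_σ σM; consequently M^sym is a C^∞ manifold of the same dimension as M. -/
open Matrix

variable {n : ℕ}

/-- Dot product on `Fin n → ℝ`. -/
def dotp (v w : Fin n → ℝ) : ℝ := ∑ i, v i * w i

/-- `M` is a `C^k` manifold of dimension `d` around `x`. -/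
def IsCkManifoldAroundDim {E : Type*} [NormedAddCommGroup E] [NormedSpace ℝ E]
    (k : ℕ∞) (d : ℕ) (M : Set E) (x : E) : Prop :=
  ∃ U : Set E, IsOpen U ∧ x ∈ U ∧ ∃ (φ ψ : E → E) (F : Submodule ℝ E),
    Module.finrank ℝ F = d ∧
    ContDiffOn ℝ k φ U ∧ ContDiffOn ℝ k ψ (φ '' U) ∧
    (∀ y ∈ U, ψ (φ y) = y) ∧ φ '' (M ∩ U) = (F : Set E) ∩ φ '' U

open Topology Filter

lemma intInt_nhd {E : Type*} [NormedAddCommGroup E] [NormedSpace ℝ E] (F : Set E) (p : E)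
    (hp : p ∈ intrinsicInterior ℝ F) :
    p ∈ F ∧ ∃ δ > (0:ℝ), ∀ w ∈ vectorSpan ℝ F, ‖w‖ < δ → p + w ∈ intrinsicInterior ℝ F := by
  refine ⟨intrinsicInterior_subset hp, ?_⟩
  obtain ⟨p', hp', rfl⟩ := hp
  obtain ⟨δ, hδ, hb⟩ := Metric.isOpen_iff.1 isOpen_interior p' hp'
  refine ⟨δ, hδ, fun w hw hwδ => ?_⟩
  have hmem : (p' : E) + w ∈ affineSpan ℝ F := by
    have := AffineSubspace.vadd_mem_of_mem_direction (s := affineSpan ℝ F)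
      (by rw [direction_affineSpan]; exact hw) p'.2
    rwa [vadd_eq_add, add_comm] at this
  refine ⟨⟨(p' : E) + w, hmem⟩, hb ?_, rfl⟩
  rw [Metric.mem_ball, Subtype.dist_eq, dist_eq_norm]
  simpa using hwδ

lemma exists_opp {E : Type*} [NormedAddCommGroup E] [NormedSpace ℝ E] (F : Set E) (p y : E)
    (hp : p ∈ intrinsicInterior ℝ F) (hy : y - p ∈ vectorSpan ℝ F) :
    ∃ z ∈ F, p ∈ openSegment ℝ y z := by
  obtain ⟨hpF, δ, hδ, h⟩ := intInt_nhd F p hp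
  have hpos : 0 < ‖y - p‖ + 1 := by positivity
  set c : ℝ := δ / (2 * (‖y - p‖ + 1)) with hc
  have hcpos : 0 < c := by positivity
  have h1 := h ((-c) • (y - p)) (Submodule.smul_mem _ _ hy) (by
    rw [norm_smul, norm_neg, Real.norm_of_nonneg hcpos.le, hc, div_mul_eq_mul_div,
      div_lt_iff₀ (by positivity)]
    nlinarith [norm_nonneg (y - p)])
  refine ⟨_, intrinsicInterior_subset h1, c / (1 + c), 1 / (1 + c), by positivity, by positivity,
    by field_simp; ring, ?_⟩
  have h1c : (1 + c) ≠ 0 := by positivity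
  have : (1 / (1 + c)) • (p + (-c) • (y - p)) = p - (c / (1 + c)) • y := by
    have e : p + (-c) • (y - p) = (1 + c) • p - c • y := by module
    rw [e, smul_sub, smul_smul, smul_smul]
    congr 1
    · rw [one_div, inv_mul_cancel₀ h1c, one_smul]
    · congr 1; field_simp
  rw [this]; abel

lemma exists_lift {n : ℕ} (V : Submodule ℝ ((Fin n → ℝ) × ℝ)) :
    ∃ g : (Fin n → ℝ) →ₗ[ℝ] ((Fin n → ℝ) × ℝ),
      ∀ v ∈ V.map (LinearMap.fst ℝ (Fin n → ℝ) ℝ), g v ∈ V ∧ (g v).1 = v := by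
  set L := LinearMap.fst ℝ (Fin n → ℝ) ℝ
  let L' : V →ₗ[ℝ] V.map L := L.submoduleMap V
  obtain ⟨g0, hg0⟩ := LinearMap.exists_rightInverse_of_surjective L'
    (LinearMap.range_eq_top.2 (L.submoduleMap_surjective V))
  obtain ⟨g, hg⟩ := LinearMap.exists_extend (V.subtype.comp g0)
  refine ⟨g, fun v hv => ?_⟩
  have e : g v = (g0 ⟨v, hv⟩ : (Fin n → ℝ) × ℝ) := by
    have := LinearMap.congr_fun hg ⟨v, hv⟩
    simpa using this
  refine ⟨e ▸ (g0 ⟨v, hv⟩).2, ?_⟩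
  rw [e]
  have := congrArg Subtype.val (LinearMap.congr_fun hg0 ⟨v, hv⟩)
  simpa [L', L] using this

/-- The permutation action on the product space, as a linear isometry. -/
noncomputable def permT {n : ℕ} (σ : Equiv.Perm (Fin n)) :
    ((Fin n → ℝ) × ℝ) →ₗᵢ[ℝ] ((Fin n → ℝ) × ℝ) where
  toFun p := (p.1 ∘ σ, p.2)
  map_add' p q := rfl
  map_smul' c p := rfl
  norm_map' p := by
    have h : ‖p.1 ∘ σ‖ = ‖p.1‖ := by
      apply le_antisymm
      · refine (pi_norm_le_iff_of_nonneg (norm_nonneg _)).2 fun i => norm_le_pi_norm p.1 (σ i)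
      · refine (pi_norm_le_iff_of_nonneg (norm_nonneg _)).2 fun i => ?_
        have := norm_le_pi_norm (p.1 ∘ σ) (σ.symm i)
        simpa using this
    simp [Prod.norm_def, h]

lemma permT_apply {n : ℕ} (σ : Equiv.Perm (Fin n)) (p : (Fin n → ℝ) × ℝ) :
    permT σ p = (p.1 ∘ σ, p.2) := rfl

lemma extreme_eq {E : Type*} [NormedAddCommGroup E] [NormedSpace ℝ E] {P F : Set E}
    (hF : IsExtreme ℝ P F) {q y : E} (hq : q ∈ intrinsicInterior ℝ F) (hy : y ∈ P)
    (hyq : y - q ∈ vectorSpan ℝ F) : y ∈ F := by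
  obtain ⟨z, hz, hs⟩ := exists_opp F q y hq hyq
  exact hF.left_mem_of_mem_openSegment hy (hF.subset hz) (intrinsicInterior_subset hq) hs

lemma key_mem {n : ℕ} {P F : Set ((Fin n → ℝ) × ℝ)} (hcl : IsClosed P)
    (hup : ∀ x t s, (x, t) ∈ P → t ≤ s → (x, s) ∈ P)
    (hT : ∀ (σ : Equiv.Perm (Fin n)) x t, (x ∘ σ, t) ∈ P ↔ (x, t) ∈ P)
    (hF : IsExtreme ℝ P F) (σ : Equiv.Perm (Fin n)) (x : Fin n → ℝ) (t : ℝ)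
    (hp : (x, t) ∈ intrinsicInterior ℝ F) (hx : x ∘ σ ∈ closure (Prod.fst '' F)) :
    (x ∘ σ, t) ∈ F := by
  set V := vectorSpan ℝ F with hV
  have hpF : (x, t) ∈ F := intrinsicInterior_subset hp
  have hpP := hF.subset hpF
  have hp'P : (x ∘ σ, t) ∈ P := (hT σ x t).2 hpP
  obtain ⟨g, hg⟩ := exists_lift V
  have gc : Continuous g := g.continuous_of_finiteDimensional
  have hsub : ∀ y ∈ F, y - (x, t) ∈ V := fun y hy => by
    simpa using vsub_mem_vectorSpan ℝ hy hpF
  have hclose : x ∘ σ - x ∈ V.map (LinearMap.fst ℝ (Fin n → ℝ) ℝ) := by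
    have hc : IsClosed {y : Fin n → ℝ | y - x ∈ V.map (LinearMap.fst ℝ (Fin n → ℝ) ℝ)} :=
      (Submodule.closed_of_finiteDimensional
        (V.map (LinearMap.fst ℝ (Fin n → ℝ) ℝ))).preimage
        (continuous_id.sub continuous_const)
    refine closure_minimal ?_ hc hx
    rintro _ ⟨y, hy, rfl⟩
    exact ⟨_, hsub y hy, rfl⟩
  by_cases hvert : ((0 : Fin n → ℝ), (1:ℝ)) ∈ V
  · apply extreme_eq hF hp hp'P
    have h1 := hg _ hclose
    have e : ((x ∘ σ, t) : (Fin n → ℝ) × ℝ) - (x, t)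
        = g (x ∘ σ - x) + (-(g (x ∘ σ - x)).2) • ((0 : Fin n → ℝ), (1:ℝ)) := by
      ext1
      · rw [Prod.fst_add, h1.2]; simp
      · rw [Prod.snd_add]; simp
    rw [e]
    exact V.add_mem h1.1 (V.smul_mem _ hvert)
  · have hinj : ∀ c : ℝ, ((0 : Fin n → ℝ), c) ∈ V → c = 0 := by
      intro c hc
      by_contra hne
      apply hvert
      have := V.smul_mem c⁻¹ hc
      simpa [hne] using this
    have hgi : ∀ w ∈ V, g w.1 = w := by
      intro w hw
      have h1 := hg w.1 ⟨w, hw, rfl⟩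
      have h2 := V.sub_mem h1.1 hw
      have h3 : g w.1 - w = (0, (g w.1).2 - w.2) := by ext1 <;> simp [h1.2]
      rw [h3] at h2
      have := hinj _ h2
      ext1
      · exact h1.2
      · linarith
    have hs : (x, t) + g (x ∘ σ - x) ∈ F := by
      apply extreme_eq hF hp
      · have hc : IsClosed {y : Fin n → ℝ | (x, t) + g (y - x) ∈ P} :=
          hcl.preimage (continuous_const.add (gc.comp (continuous_id.sub continuous_const)))
        refine closure_minimal ?_ hc hx
        rintro _ ⟨y, hy, rfl⟩
        have := hgi _ (hsub y hy)
        simp only [Prod.fst_sub] at this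
        simp only [Set.mem_ofPred_eq, this, add_sub_cancel]
        exact hF.subset hy
      · simpa using (hg _ hclose).1
    have e : (x, t) + g (x ∘ σ - x) = (x ∘ σ, t + (g (x ∘ σ - x)).2) := by
      ext1
      · rw [Prod.fst_add, (hg _ hclose).2]; simp
      · rfl
    rw [e] at hs
    set s := t + (g (x ∘ σ - x)).2
    have seg : ∀ (z : Fin n → ℝ) (a b : ℝ), a < b → (z, a) ∈ P → (z, b) ∈ F → (z, a) ∈ F := by
      intro z a b hab ha hb
      refine hF.left_mem_of_mem_openSegment ha (hup z b (b + (b - a)) (hF.subset hb) (by linarith))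
        hb ⟨1/2, 1/2, by norm_num, by norm_num, by norm_num, ?_⟩
      ext1
      · ext i; simp; ring
      · simp; ring
    rcases lt_trichotomy s t with h | h | h
    · exfalso
      have hxs : (x, s) ∈ P := (hT σ x s).1 (hF.subset hs)
      have h2 := hsub _ (seg x s t h hxs hpF)
      have := hinj (s - t) (by simpa using h2)
      linarith
    · rwa [← h]
    · exact seg _ _ _ h hp'P hs

lemma permT_pow {n : ℕ} {F : Set ((Fin n → ℝ) × ℝ)} (σ : Equiv.Perm (Fin n))
    (h : ∀ p ∈ F, permT σ p ∈ F) (k : ℕ) : ∀ p ∈ F, permT (σ ^ k) p ∈ F := by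
  induction k with
  | zero => intro p hp; simpa [permT_apply] using hp
  | succ k ih =>
    intro p hp
    have := ih _ (h p hp)
    rw [pow_succ']
    exact this

lemma permT_image {n : ℕ} {F : Set ((Fin n → ℝ) × ℝ)} (σ : Equiv.Perm (Fin n))
    (h : ∀ p ∈ F, permT σ p ∈ F) : permT σ '' F = F := by
  apply Set.Subset.antisymm
  · rintro _ ⟨p, hp, rfl⟩; exact h p hp
  · intro p hp
    refine ⟨permT (σ ^ (orderOf σ - 1)) p, permT_pow σ h _ p hp, ?_⟩
    have e : σ ^ (orderOf σ - 1) * σ = 1 := by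
      rw [← pow_succ, Nat.sub_add_cancel (orderOf_pos σ), pow_orderOf_eq_one]
    have : ∀ τ : Equiv.Perm (Fin n), permT σ (permT τ p) = permT (τ * σ) p := fun _ => rfl
    rw [this, e]; rfl

lemma local_sym {n : ℕ} {P F : Set ((Fin n → ℝ) × ℝ)} (hcl : IsClosed P)
    (hup : ∀ x t s, (x, t) ∈ P → t ≤ s → (x, s) ∈ P)
    (hT : ∀ (σ : Equiv.Perm (Fin n)) x t, (x ∘ σ, t) ∈ P ↔ (x, t) ∈ P)
    (hF : IsExtreme ℝ P F) (σ : Equiv.Perm (Fin n)) (x : Fin n → ℝ)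
    (hx : x ∈ Prod.fst '' intrinsicInterior ℝ F) :
    ∀ᶠ y in 𝓝 x, y ∘ σ ∈ Prod.fst '' intrinsicInterior ℝ F →
      y ∈ Prod.fst '' intrinsicInterior ℝ F := by
  have hcont : Continuous (fun y : Fin n → ℝ => y ∘ σ) :=
    continuous_pi fun i => continuous_apply (σ i)
  by_cases hc : x ∘ σ ∈ closure (Prod.fst '' F)
  · refine Eventually.of_forall fun y hy => ?_
    obtain ⟨⟨x', t⟩, hp, rfl⟩ := hx
    have hm := key_mem hcl hup hT hF σ x' t hp hc
    have hsub : ∀ p ∈ F, permT σ p ∈ F := by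
      intro p hpF
      obtain ⟨z, hz, hs⟩ := exists_opp F _ p hp
        (by simpa using vsub_mem_vectorSpan ℝ hpF (intrinsicInterior_subset hp))
      refine hF.left_mem_of_mem_openSegment ((hT σ _ _).2 (hF.subset hpF) : permT σ p ∈ P)
        ((hT σ _ _).2 (hF.subset hz) : permT σ z ∈ P) hm ?_
      obtain ⟨a, b, ha, hb, hab, e⟩ := hs
      refine ⟨a, b, ha, hb, hab, ?_⟩
      change a • permT σ p + b • permT σ z = permT σ (x', t)
      rw [← map_smul, ← map_smul, ← map_add, e]
    have him := permT_image σ hsub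
    have h2 := AffineIsometry.intrinsicInterior_image (permT σ).toAffineIsometry F
    have h3 : permT σ '' intrinsicInterior ℝ F = intrinsicInterior ℝ F := by
      have : intrinsicInterior ℝ (permT σ '' F) = permT σ '' intrinsicInterior ℝ F := h2
      rw [← this, him]
    obtain ⟨r, hr, hry⟩ := hy
    rw [← h3] at hr
    obtain ⟨r', hr', rfl⟩ := hr
    refine ⟨r', hr', ?_⟩
    have h4 : r'.1 ∘ σ = y ∘ σ := hry
    exact σ.surjective.injective_comp_right h4
  · have : ∀ᶠ y in 𝓝 x, y ∘ σ ∈ (closure (Prod.fst '' F))ᶜ :=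
      hcont.continuousAt.eventually (isClosed_closure.isOpen_compl.mem_nhds hc)
    filter_upwards [this] with y hy h
    exact absurd (subset_closure (Set.image_mono intrinsicInterior_subset h)) hy

lemma rel_open {n : ℕ} (F : Set ((Fin n → ℝ) × ℝ)) (x : Fin n → ℝ)
    (hx : x ∈ Prod.fst '' intrinsicInterior ℝ F) :
    ∃ δ > (0:ℝ), ∀ v ∈ vectorSpan ℝ (Prod.fst '' intrinsicInterior ℝ F), ‖v‖ < δ →
      x + v ∈ Prod.fst '' intrinsicInterior ℝ F := by
  obtain ⟨p, hp, rfl⟩ := hx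
  obtain ⟨-, δ, hδ, h⟩ := intInt_nhd F p hp
  obtain ⟨g, hg⟩ := exists_lift (vectorSpan ℝ F)
  have gc : Continuous g := g.continuous_of_finiteDimensional
  obtain ⟨η, hη, hgη⟩ := Metric.continuousAt_iff.1 (gc.continuousAt (x := 0)) δ hδ
  have hle : vectorSpan ℝ (Prod.fst '' intrinsicInterior ℝ F) ≤
      (vectorSpan ℝ F).map (LinearMap.fst ℝ (Fin n → ℝ) ℝ) := by
    rw [vectorSpan, Submodule.span_le]
    rintro _ ⟨_, ⟨a, ha, rfl⟩, _, ⟨b, hb, rfl⟩, rfl⟩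
    exact ⟨a - b, vsub_mem_vectorSpan ℝ (intrinsicInterior_subset ha)
      (intrinsicInterior_subset hb), rfl⟩
  refine ⟨η, hη, fun v hv hvη => ?_⟩
  have h1 := hg v (hle hv)
  refine ⟨p + g v, h _ h1.1 ?_, by simp [h1.2]⟩
  have := @hgη v (by simpa using hvη)
  simpa using this

/-- For a symmetric convex polyhedral function `f` and a stratum `M` of the induced polyhedral
stratification of `dom f` (the projection of the relative interior of a face of `epi f` of
dimension at most `n`), the symmetrization `M^sym = ⋃_σ σM` locally coincides with `M` around
each point of `M`, and `M^sym` is a `C^∞` manifold of the same dimension as `M`. -/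
theorem stratum_symmetrization (f : (Fin n → ℝ) → EReal)
    (hsym : ∀ (σ : Equiv.Perm (Fin n)) (x : Fin n → ℝ), f (x ∘ σ) = f x)
    (hconv : Convex ℝ {p : (Fin n → ℝ) × ℝ | f p.1 ≤ (p.2 : EReal)})
    (hpoly : ∃ (k : ℕ) (a : Fin k → (Fin n → ℝ)) (b c : Fin k → ℝ),
      {p : (Fin n → ℝ) × ℝ | f p.1 ≤ (p.2 : EReal)} =
        {p : (Fin n → ℝ) × ℝ | ∀ i, dotp (a i) p.1 + b i * p.2 ≤ c i})
    (F : Set ((Fin n → ℝ) × ℝ))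
    (hF : IsExtreme ℝ {p : (Fin n → ℝ) × ℝ | f p.1 ≤ (p.2 : EReal)} F)
    (hdim : Module.finrank ℝ (vectorSpan ℝ F) ≤ n)
    (M : Set (Fin n → ℝ)) (hM : M = Prod.fst '' intrinsicInterior ℝ F) :
    (∀ x ∈ M, ∃ ε > (0:ℝ), ∀ y : Fin n → ℝ, ‖y - x‖ < ε →
      ((∃ σ : Equiv.Perm (Fin n), y ∘ σ ∈ M) ↔ y ∈ M)) ∧
    ∀ x ∈ {y : Fin n → ℝ | ∃ σ : Equiv.Perm (Fin n), y ∘ σ ∈ M},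
      IsCkManifoldAroundDim (⊤ : ℕ∞) (Module.finrank ℝ (vectorSpan ℝ M))
        {y : Fin n → ℝ | ∃ σ : Equiv.Perm (Fin n), y ∘ σ ∈ M} x := by
  have hup : ∀ x t s, (x, t) ∈ {p : (Fin n → ℝ) × ℝ | f p.1 ≤ (p.2 : EReal)} → t ≤ s →
      (x, s) ∈ {p : (Fin n → ℝ) × ℝ | f p.1 ≤ (p.2 : EReal)} := fun x t s h hts =>
    le_trans (α := EReal) h (EReal.coe_le_coe_iff.2 hts)
  have hT : ∀ (σ : Equiv.Perm (Fin n)) x t,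
      (x ∘ σ, t) ∈ {p : (Fin n → ℝ) × ℝ | f p.1 ≤ (p.2 : EReal)} ↔
      (x, t) ∈ {p : (Fin n → ℝ) × ℝ | f p.1 ≤ (p.2 : EReal)} := by
    intro σ x t
    simp only [Set.mem_ofPred_eq, hsym]
  have hcl : IsClosed {p : (Fin n → ℝ) × ℝ | f p.1 ≤ (p.2 : EReal)} := by
    obtain ⟨k, a, b, c, h⟩ := hpoly
    rw [h, Set.ofPred_forall]
    refine isClosed_iInter fun i => isClosed_le ?_ continuous_const
    unfold dotp
    fun_prop
  have hloc : ∀ x ∈ M, ∃ ε > (0:ℝ), ∀ y : Fin n → ℝ, ‖y - x‖ < ε →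
      ((∃ σ : Equiv.Perm (Fin n), y ∘ σ ∈ M) ↔ y ∈ M) := by
    intro x hx
    subst hM
    have h := eventually_all.2 fun σ => local_sym hcl hup hT hF σ x hx
    obtain ⟨ε, hε, hb⟩ := Metric.eventually_nhds_iff.1 h
    refine ⟨ε, hε, fun y hy => ⟨fun ⟨σ, hσ⟩ => hb (by rwa [dist_eq_norm]) σ hσ,
      fun hyM => ⟨1, hyM⟩⟩⟩
  refine ⟨hloc, ?_⟩
  rintro x ⟨σ, hσ⟩
  obtain ⟨ε, hε, hiff⟩ := hloc _ hσ
  obtain ⟨δ, hδ, hop⟩ : ∃ δ > (0:ℝ), ∀ v ∈ vectorSpan ℝ M, ‖v‖ < δ → x ∘ σ + v ∈ M := by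
    subst hM
    exact rel_open F _ hσ
  have hc1 : ContDiff ℝ (⊤ : ℕ∞) (fun y : Fin n → ℝ => y ∘ σ - x ∘ σ) := by
    refine contDiff_pi.2 fun i => ?_
    exact (contDiff_apply ℝ ℝ (σ i)).sub contDiff_const
  have hc2 : ContDiff ℝ (⊤ : ℕ∞) (fun z : Fin n → ℝ => (z + x ∘ σ) ∘ σ.symm) := by
    refine contDiff_pi.2 fun i => ?_
    exact (contDiff_apply ℝ ℝ (σ.symm i)).add contDiff_const
  have hsymiff : ∀ y : Fin n → ℝ, ‖y ∘ σ - x ∘ σ‖ < ε →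
      ((∃ τ : Equiv.Perm (Fin n), y ∘ τ ∈ M) ↔ y ∘ σ ∈ M) := by
    intro y hy
    rw [← hiff _ hy]
    constructor
    · rintro ⟨τ, hτ⟩
      refine ⟨σ⁻¹ * τ, ?_⟩
      have : (y ∘ σ) ∘ (σ⁻¹ * τ : Equiv.Perm (Fin n)) = y ∘ τ := by
        ext i; simp
      rwa [this]
    · rintro ⟨τ, hτ⟩
      exact ⟨σ * τ, hτ⟩
  refine ⟨{y | ‖y ∘ σ - x ∘ σ‖ < min ε δ}, isOpen_lt hc1.continuous.norm continuous_const,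
    by simp [hε, hδ], fun y => y ∘ σ - x ∘ σ, fun z => (z + x ∘ σ) ∘ σ.symm, vectorSpan ℝ M, rfl,
    hc1.contDiffOn, hc2.contDiffOn, ?_, ?_⟩
  · intro y _
    ext i; simp
  · ext z
    constructor
    · rintro ⟨y, ⟨hyM, hyU⟩, rfl⟩
      refine ⟨?_, y, hyU, rfl⟩
      have h1 := (hsymiff y (lt_of_lt_of_le hyU (min_le_left _ _))).1 hyM
      simpa using vsub_mem_vectorSpan ℝ h1 hσ
    · rintro ⟨hz, y, hyU, rfl⟩
      refine ⟨y, ⟨?_, hyU⟩, rfl⟩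
      refine (hsymiff y (lt_of_lt_of_le hyU (min_le_left _ _))).2 ?_
      have := hop _ hz (lt_of_lt_of_le hyU (min_le_right _ _))
      simpa using this
end

section
/- Fix 0 ≤ k ≤ n. Let M⁺_k = {X ∈ Sⁿ : X positive semidefinite, rank X = k}. Then M⁺_k = λ⁻¹(M) where M = {x ∈ ℝⁿ_≥ : exactly k coordinates of x are positive and the rest are zero}^sym, and M⁺_k is a C^∞ submanifold of Sⁿ. -/
open Matrix

attribute [local instance] Matrix.normedAddCommGroup Matrix.normedSpace

/-- `M` is a `C^k` manifold around `x` (in an ambient normed space). -/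
def IsCkManifoldAround {E : Type*} [NormedAddCommGroup E] [NormedSpace ℝ E]
    (k : ℕ∞) (M : Set E) (x : E) : Prop :=
  ∃ U : Set E, IsOpen U ∧ x ∈ U ∧ ∃ (φ ψ : E → E) (F : Submodule ℝ E),
    ContDiffOn ℝ k φ U ∧ ContDiffOn ℝ k ψ (φ '' U) ∧
    (∀ y ∈ U, ψ (φ y) = y) ∧ φ '' (M ∩ U) = (F : Set E) ∩ φ '' U

namespace PsdAux

abbrev Mat (n : ℕ) := Matrix (Fin n) (Fin n) ℝ

lemma sorted_pos {n k : ℕ} (z : Fin n → ℝ) (hz : Antitone z) (h0 : ∀ i, 0 ≤ z i)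
    (hc : (Finset.univ.filter (fun i => z i ≠ 0)).card = k) (i : Fin n) :
    if (i : ℕ) < k then 0 < z i else z i = 0 := by
  split_ifs with h
  · by_contra hn
    have hi : z i = 0 := le_antisymm (not_lt.mp hn) (h0 i)
    have : (Finset.univ.filter (fun i => z i ≠ 0)) ⊆ Finset.Iio i := by
      intro j hj
      simp only [Finset.mem_filter, Finset.mem_univ, true_and] at hj
      rw [Finset.mem_Iio]
      by_contra hji
      exact hj (le_antisymm (hi ▸ hz (not_lt.mp hji)) (h0 j))
    have := Finset.card_le_card this
    rw [hc, Fin.card_Iio] at this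
    omega
  · by_contra hn
    have : Finset.Iic i ⊆ (Finset.univ.filter (fun i => z i ≠ 0)) := by
      intro j hj
      rw [Finset.mem_Iic] at hj
      simp only [Finset.mem_filter, Finset.mem_univ, true_and]
      have h1 : 0 < z i := lt_of_le_of_ne (h0 i) (Ne.symm hn)
      exact (h1.trans_le (hz hj)).ne'
    have := Finset.card_le_card this
    rw [hc, Fin.card_Iic] at this
    omega

lemma card_of_pattern {n k : ℕ} (hk : k ≤ n) (x : Fin n → ℝ) (σ : Equiv.Perm (Fin n))
    (h : ∀ i : Fin n, if (i : ℕ) < k then 0 < (x ∘ σ) i else (x ∘ σ) i = 0) :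
    Fintype.card {i // x i ≠ 0} = k := by
  have e : {i // x i ≠ 0} ≃ {i : Fin n // (i : ℕ) < k} := by
    refine (σ.subtypeEquiv (p := fun i : Fin n => (i : ℕ) < k) (q := fun i => x i ≠ 0) ?_).symm
    intro i
    have := h i
    split_ifs at this with hi
    · simpa [hi] using this.ne'
    · simpa [hi] using this
  rw [Fintype.card_congr e, Fintype.card_subtype]
  have : (Finset.univ.filter (fun i : Fin n => (i : ℕ) < k)).card = min n k := by
    simpa using (Fin.card_filter_val_lt (n := n) (m := k))
  omega

lemma nonneg_of_pattern {n k : ℕ} (x : Fin n → ℝ) (σ : Equiv.Perm (Fin n))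
    (h : ∀ i : Fin n, if (i : ℕ) < k then 0 < (x ∘ σ) i else (x ∘ σ) i = 0) (i : Fin n) :
    0 ≤ x i := by
  have := h (σ.symm i)
  simp only [Function.comp, Equiv.apply_symm_apply] at this
  split_ifs at this
  · exact this.le
  · exact this.ge

lemma exists_spec {n k : ℕ} (X : Mat n) (hX : X.PosSemidef) (hr : X.rank = k) :
    ∃ x : Fin n → ℝ,
        (∃ σ : Equiv.Perm (Fin n), Antitone (x ∘ σ) ∧
          ∀ i : Fin n, if (i : ℕ) < k then 0 < (x ∘ σ) i else (x ∘ σ) i = 0) ∧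
        ∃ U : Matrix (Fin n) (Fin n) ℝ, Uᵀ * U = 1 ∧ X = Uᵀ * Matrix.diagonal x * U := by
  set x := hX.1.eigenvalues with hx
  refine ⟨x, ?_, ?_⟩
  · let σ := Tuple.sort (fun i => - x i)
    have hanti : Antitone (x ∘ σ) := by
      intro i j hij
      have := Tuple.monotone_sort (fun i => - x i) hij
      simpa using this
    refine ⟨σ, hanti, sorted_pos _ hanti (fun i => hX.eigenvalues_nonneg _) ?_⟩
    rw [← hr, hX.1.rank_eq_card_non_zero_eigs, ← Fintype.card_subtype]
    exact Fintype.card_congr (σ.subtypeEquiv (fun i => by simp [hx]))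
  · have hs := hX.1.spectral_theorem
    rw [Unitary.conjStarAlgAut_apply] at hs
    refine ⟨(hX.1.eigenvectorUnitary : Mat n)ᵀ, ?_, ?_⟩
    · have := Unitary.coe_mul_star_self hX.1.eigenvectorUnitary
      simpa [Matrix.star_eq_conjTranspose] using this
    · simpa [Matrix.star_eq_conjTranspose, Function.comp_def] using hs

lemma rank_conj {n : ℕ} (U D : Mat n) (hU : Uᵀ * U = 1) : (Uᵀ * D * U).rank = D.rank := by
  have h1 : IsUnit U.det := Matrix.isUnit_det_of_left_inverse hU
  have h2 : IsUnit Uᵀ.det := by rwa [Matrix.det_transpose]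
  rw [Matrix.rank_mul_eq_left_of_isUnit_det _ _ h1, Matrix.rank_mul_eq_right_of_isUnit_det _ _ h2]

lemma of_spec {n k : ℕ} (hk : k ≤ n) (x : Fin n → ℝ) (σ : Equiv.Perm (Fin n))
    (h : ∀ i : Fin n, if (i : ℕ) < k then 0 < (x ∘ σ) i else (x ∘ σ) i = 0)
    (U : Mat n) (hU : Uᵀ * U = 1) :
    (Uᵀ * Matrix.diagonal x * U).PosSemidef ∧ (Uᵀ * Matrix.diagonal x * U).rank = k := by
  constructor
  · have := (Matrix.PosSemidef.diagonal (d := x)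
      (fun i => nonneg_of_pattern x σ h i)).conjTranspose_mul_mul_same U
    simpa using this
  · rw [rank_conj _ _ hU, Matrix.rank_diagonal]
    exact card_of_pattern hk x σ h

/-! ### Algebra -/

section ring
variable {R : Type*} [Ring R] {P Y A B C : R}

lemma comm1 (hP : P * P = P) (hA : A = P * Y * P + (1 - P)) (hAB : A * B = 1) (hBA : B * A = 1) :
    P * B = B * P := by
  have h1 : P * A = A * P := by
    rw [hA]
    simp only [mul_add, add_mul, mul_sub, sub_mul, mul_one, one_mul, hP, mul_assoc]
    simp only [← mul_assoc, hP]
  calc P * B = B * A * P * B := by rw [hBA, one_mul]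
    _ = B * (A * P) * B := by noncomm_ring
    _ = B * P * (A * B) := by rw [← h1]; noncomm_ring
    _ = B * P := by rw [hAB, mul_one]

lemma PA (hP : P * P = P) (hA : A = P * Y * P + (1 - P)) : P * A = P * Y * P := by
  rw [hA]
  simp only [mul_add, mul_sub, mul_one, hP, ← mul_assoc]
  simp

lemma AP (hP : P * P = P) (hA : A = P * Y * P + (1 - P)) : A * P = P * Y * P := by
  rw [hA]
  simp only [add_mul, sub_mul, one_mul, hP, mul_assoc]
  simp

lemma factor (hP : P * P = P) (hA : A = P * Y * P + (1 - P)) (hBA : B * A = 1)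
    (hY : Y = Y * P * C) : Y = Y * P * (B * (P * Y)) := by
  have h1 : A * P * C = P * Y := by
    rw [AP hP hA]
    calc P * Y * P * C = P * (Y * P * C) := by noncomm_ring
      _ = P * Y := by rw [← hY]
  have h2 : P * C = B * (P * Y) := by
    rw [← h1, mul_assoc, ← mul_assoc B, hBA, one_mul]
  rw [← h2, mul_assoc, ← mul_assoc P, hP, ← mul_assoc]
  exact hY

lemma unfactor (hP : P * P = P) (hA : A = P * Y * P + (1 - P)) (hAB : A * B = 1) (hBA : B * A = 1)
    (hS : (1 - P) * Y * (1 - P) = (1 - P) * Y * P * B * (P * Y * (1 - P))) :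
    Y = Y * P * (B * (P * Y)) := by
  have hl : P * Y * P * B = P := by rw [← PA hP hA, mul_assoc, hAB, mul_one]
  have hr : B * (P * Y * P) = P := by rw [← AP hP hA, ← mul_assoc, hBA, one_mul]
  set W := Y * P * (B * (P * Y)) with hW
  have e1 : P * W = P * Y := by
    calc P * W = P * Y * P * B * (P * Y) := by rw [hW]; noncomm_ring
      _ = P * Y := by rw [hl, ← mul_assoc, hP]
  have e2 : W * P = Y * P := by
    calc W * P = Y * P * (B * (P * Y * P)) := by rw [hW]; noncomm_ring
      _ = Y * P := by rw [hr, mul_assoc, hP]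
  have e3 : (1 - P) * W * (1 - P) = (1 - P) * Y * (1 - P) := by
    rw [hS, hW]; simp only [mul_assoc]
  have key : ∀ Z : R, Z = P * Z + Z * P - P * (Z * P) + (1 - P) * Z * (1 - P) := by
    intro Z; noncomm_ring
  rw [key W, key Y, e3, e1, e2]

lemma fact3 (hP : P * P = P) (E : R) :
    P * ((1 - P) * E) = 0 ∧ (E * (1 - P)) * P = 0 := by
  constructor
  · rw [← mul_assoc, mul_sub, hP]; simp
  · rw [mul_assoc, sub_mul, hP]; simp

end ring

/-! ### The chart -/

noncomputable def Af {n : ℕ} (P Y : Mat n) : Mat n := P * Y * P + (1 - P)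

noncomputable def Ef {n : ℕ} (P Y : Mat n) : Mat n :=
  (1 - P) * Y * P * (Af P Y)⁻¹ * (P * Y * (1 - P))

lemma P_Ef {n : ℕ} {P : Mat n} (hP : P * P = P) (Y : Mat n) : P * Ef P Y = 0 := by
  have := (fact3 hP (Y * P * (Af P Y)⁻¹ * (P * Y * (1 - P)))).1
  simpa only [Ef, mul_assoc] using this

lemma Ef_P {n : ℕ} {P : Mat n} (hP : P * P = P) (Y : Mat n) : Ef P Y * P = 0 := by
  have := (fact3 hP ((1 - P) * Y * P * (Af P Y)⁻¹ * (P * Y))).2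
  simpa only [Ef, mul_assoc] using this

lemma Af_add {n : ℕ} {P : Mat n} (hP : P * P = P) (Y Z : Mat n) (h : P * Z = 0) :
    Af P (Y + Z) = Af P Y := by
  simp [Af, mul_add, h]

lemma Ef_add {n : ℕ} {P : Mat n} (hP : P * P = P) (Y Z : Mat n) (h : P * Z = 0) (h' : Z * P = 0) :
    Ef P (Y + Z) = Ef P Y := by
  unfold Ef
  rw [Af_add hP _ _ h]
  have e1 : (1 - P) * (Y + Z) * P = (1 - P) * Y * P := by
    rw [mul_assoc, add_mul, h', add_zero, ← mul_assoc]
  have e2 : P * (Y + Z) = P * Y := by rw [mul_add, h, add_zero]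
  rw [e1, e2]

lemma Af_transpose {n : ℕ} {P : Mat n} (hPt : Pᵀ = P) (Y : Mat n) :
    (Af P Y)ᵀ = Af P Yᵀ := by
  simp [Af, Matrix.transpose_mul, hPt, mul_assoc]

lemma Ef_transpose {n : ℕ} {P : Mat n} (hPt : Pᵀ = P) (Y : Mat n) :
    (Ef P Y)ᵀ = Ef P Yᵀ := by
  simp [Ef, Matrix.transpose_mul, hPt, mul_assoc, Matrix.transpose_nonsing_inv, Af_transpose hPt]

def Uset {n : ℕ} (P : Mat n) : Set (Mat n) :=
  {Y | ∀ x ∈ Metric.sphere (0 : Fin n → ℝ) 1, 0 < x ⬝ᵥ (Af P Y *ᵥ x)}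

lemma isOpen_Uset {n : ℕ} (P : Mat n) : IsOpen (Uset P) := by
  rw [isOpen_iff_eventually]
  intro Y hY
  refine (isCompact_sphere (0 : Fin n → ℝ) 1).eventually_forall_of_forall_eventually ?_
  intro x hx
  have hc : Continuous (fun z : Mat n × (Fin n → ℝ) => z.2 ⬝ᵥ (Af P z.1 *ᵥ z.2)) := by
    unfold Af
    fun_prop
  exact hc.continuousAt.eventually (lt_mem_nhds (hY x hx))

lemma Uset_pos {n : ℕ} {P Y : Mat n} (hY : Y ∈ Uset P) {x : Fin n → ℝ} (hx : x ≠ 0) :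
    0 < x ⬝ᵥ (Af P Y *ᵥ x) := by
  have hn : 0 < ‖x‖ := norm_pos_iff.mpr hx
  have h := hY (‖x‖⁻¹ • x) (by simp [norm_smul, hn.ne'])
  rw [Matrix.mulVec_smul, smul_dotProduct, dotProduct_smul, smul_eq_mul, smul_eq_mul] at h
  have h2 : 0 < ‖x‖⁻¹ := inv_pos.mpr hn
  exact (pos_iff_pos_of_mul_pos (by exact (pos_iff_pos_of_mul_pos h).mp h2 |> fun q => q)).mp h2

lemma Uset_isUnit {n : ℕ} {P Y : Mat n} (hY : Y ∈ Uset P) : IsUnit (Af P Y).det := by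
  rw [isUnit_iff_ne_zero]
  intro h
  obtain ⟨v, hv, hv2⟩ := Matrix.exists_mulVec_eq_zero_iff.mpr h
  have := Uset_pos hY hv
  simp [hv2] at this

lemma det_contDiff {n m : ℕ} {k : WithTop ℕ∞} {f : Mat n → Mat m}
    {s : Set (Mat n)} (hf : ∀ i j, ContDiffOn ℝ k (fun Y => f Y i j) s) :
    ContDiffOn ℝ k (fun Y => (f Y).det) s := by
  simp only [Matrix.det_apply']
  refine ContDiffOn.sum fun σ _ => ?_
  exact contDiffOn_const.mul (contDiffOn_prod fun i _ => hf _ _)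

lemma entries {n m : ℕ} {k : WithTop ℕ∞} {f : Mat n → Mat m}
    {s : Set (Mat n)} : ContDiffOn ℝ k f s ↔ ∀ i j, ContDiffOn ℝ k (fun Y => f Y i j) s := by
  constructor
  · intro h i j
    exact contDiffOn_pi.mp (contDiffOn_pi.mp h i) j
  · intro h
    exact contDiffOn_pi.mpr fun i => contDiffOn_pi.mpr fun j => h i j

lemma mul_contDiff {n : ℕ} {k : WithTop ℕ∞} {f g : Mat n → Mat n}
    {s : Set (Mat n)} (hf : ContDiffOn ℝ k f s) (hg : ContDiffOn ℝ k g s) :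
    ContDiffOn ℝ k (fun Y => f Y * g Y) s := by
  rw [entries] at *
  intro i j
  simp only [Matrix.mul_apply]
  exact ContDiffOn.sum fun l _ => (hf i l).mul (hg l j)

lemma inv_contDiff {n : ℕ} {k : WithTop ℕ∞} {f : Mat n → Mat n}
    {s : Set (Mat n)} (hf : ContDiffOn ℝ k f s) (hu : ∀ y ∈ s, IsUnit (f y).det) :
    ContDiffOn ℝ k (fun Y => (f Y)⁻¹) s := by
  rw [entries] at *
  intro i j
  simp only [Matrix.inv_def, Ring.inverse_eq_inv', Matrix.smul_apply, smul_eq_mul]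
  refine ((det_contDiff hf).inv fun y hy => (hu y hy).ne_zero).mul ?_
  simp only [Matrix.adjugate_apply]
  refine det_contDiff fun a b => ?_
  by_cases h : a = j
  · subst h
    simp only [Matrix.updateRow_self]
    exact contDiffOn_const
  · simp only [Matrix.updateRow_ne h]
    exact hf a b

lemma Af_contDiff {n : ℕ} {k : WithTop ℕ∞} (P : Mat n) (s : Set (Mat n)) :
    ContDiffOn ℝ k (Af P) s := by
  unfold Af
  exact (mul_contDiff (mul_contDiff contDiffOn_const contDiffOn_id) contDiffOn_const).add
    contDiffOn_const

lemma Ef_contDiff {n : ℕ} {k : WithTop ℕ∞} (P : Mat n) :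
    ContDiffOn ℝ k (Ef P) (Uset P) := by
  unfold Ef
  exact mul_contDiff (mul_contDiff (mul_contDiff (mul_contDiff contDiffOn_const contDiffOn_id)
    contDiffOn_const) (inv_contDiff (Af_contDiff P _) fun y hy => Uset_isUnit hy))
    (mul_contDiff (mul_contDiff contDiffOn_const contDiffOn_id) contDiffOn_const)

def Fsub {n : ℕ} (P : Mat n) : Submodule ℝ (Mat n) where
  carrier := {Z | Zᵀ = Z ∧ (1 - P) * Z * (1 - P) = 0}
  zero_mem' := by simp
  add_mem' := by
    rintro a b ⟨h1, h2⟩ ⟨h3, h4⟩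
    exact ⟨by rw [Matrix.transpose_add, h1, h3], by rw [mul_add, add_mul, h2, h4, add_zero]⟩
  smul_mem' := by
    rintro c a ⟨h1, h2⟩
    exact ⟨by rw [Matrix.transpose_smul, h1], by
      rw [Matrix.mul_smul, Matrix.smul_mul, h2, smul_zero]⟩

lemma exists_factor {n : ℕ} (Y P : Mat n) (h : Y.rank ≤ (Y * P).rank) :
    ∃ C : Mat n, Y = Y * P * C := by
  have hle : LinearMap.range (Y * P).mulVecLin ≤ LinearMap.range Y.mulVecLin := by
    rw [Matrix.mulVecLin_mul]
    exact LinearMap.range_comp_le_range _ _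
  have heq := Submodule.eq_of_le_of_finrank_le hle h
  have : ∀ j : Fin n, ∃ c : Fin n → ℝ, (Y * P) *ᵥ c = Y *ᵥ (Pi.single j 1) := by
    intro j
    have hm : Y *ᵥ (Pi.single j 1) ∈ LinearMap.range Y.mulVecLin := ⟨Pi.single j 1, rfl⟩
    rw [← heq] at hm
    exact hm
  choose c hc using this
  refine ⟨Matrix.of fun i j => c j i, ?_⟩
  ext i j
  have := congrFun (hc j) i
  rw [Matrix.mulVec_single_one] at this
  rw [Matrix.mul_apply]
  exact this.symm

lemma mem_iff {n k : ℕ} {P Y : Mat n} (hP : P * P = P) (hPt : Pᵀ = P) (hPr : P.rank = k)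
    (hY : Y ∈ Uset P) : (Y.PosSemidef ∧ Y.rank = k) ↔ Y - Ef P Y ∈ Fsub P := by
  have hu := Uset_isUnit hY
  have hAB := Matrix.mul_nonsing_inv _ hu
  have hBA := Matrix.nonsing_inv_mul _ hu
  have hA : Af P Y = P * Y * P + (1 - P) := rfl
  have hE : (1 - P) * Ef P Y * (1 - P) = Ef P Y := by
    have h1 := P_Ef hP Y
    have h2 := Ef_P hP Y
    rw [sub_mul, one_mul, h1, sub_zero, mul_sub, mul_one, h2, sub_zero]
  have hrT : (P * Y * P).rank = k := by
    rw [← AP hP hA, Matrix.rank_mul_eq_right_of_isUnit_det _ _ hu, hPr]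
  constructor
  · rintro ⟨hpsd, hr⟩
    have hsym : Yᵀ = Y := by simpa using hpsd.1.eq
    refine ⟨?_, ?_⟩
    · rw [Matrix.transpose_sub, Ef_transpose hPt, hsym]
    · have : Y.rank ≤ (Y * P).rank := by
        rw [hr, ← hrT, mul_assoc]
        exact Matrix.rank_mul_le_right _ _
      obtain ⟨C, hC⟩ := exists_factor Y P this
      have hf := factor hP hA hBA hC
      rw [mul_sub (1 - P) Y, sub_mul ((1 - P) * Y), hE, sub_eq_zero]
      conv_lhs => rw [hf]
      simp only [Ef, mul_assoc]
  · rintro ⟨h1, h2⟩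
    have hEs : Ef P (Y - Ef P Y) = Ef P Y := by
      rw [sub_eq_add_neg]
      exact Ef_add hP _ _ (by rw [mul_neg, P_Ef hP, neg_zero]) (by rw [neg_mul, Ef_P hP, neg_zero])
    have hEt : (Ef P Y)ᵀ = Ef P Y := by
      rw [← hEs, Ef_transpose hPt, h1]
    have hsym : Yᵀ = Y := by
      rw [Matrix.transpose_sub, hEt] at h1
      exact sub_left_injective h1
    rw [mul_sub (1 - P) Y, sub_mul ((1 - P) * Y), hE, sub_eq_zero] at h2
    have hf := unfactor hP hA hAB hBA h2
    have hpd : (Af P Y).PosDef := by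
      refine Matrix.PosDef.of_dotProduct_mulVec_pos ?_ ?_
      · rw [Matrix.IsHermitian, Matrix.conjTranspose_eq_transpose_of_trivial, Af_transpose hPt, hsym]
      · intro x hx
        simpa using Uset_pos hY hx
    constructor
    · have := hpd.inv.posSemidef.conjTranspose_mul_mul_same (P * Y)
      rw [Matrix.conjTranspose_eq_transpose_of_trivial, Matrix.transpose_mul, hPt, hsym,
        mul_assoc (Y * P), ← hf] at this
      exact this
    · apply le_antisymm
      · rw [hf, mul_assoc, ← hPr]
        exact (Matrix.rank_mul_le_right _ _).trans (Matrix.rank_mul_le_left _ _)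
      · rw [← hrT]
        exact (Matrix.rank_mul_le_left _ _).trans (Matrix.rank_mul_le_right _ _)

lemma exists_proj {n k : ℕ} (hk : k ≤ n) (X : Mat n) (hX : X.PosSemidef) (hr : X.rank = k) :
    ∃ P : Mat n, P * P = P ∧ Pᵀ = P ∧ P.rank = k ∧ X ∈ Uset P := by
  obtain ⟨x, ⟨σ, -, hσ⟩, U, hU, rfl⟩ := exists_spec X hX hr
  have hU' : U * Uᵀ = 1 := mul_eq_one_comm.mp hU
  have hmul : ∀ d e : Fin n → ℝ, (Uᵀ * diagonal d * U) * (Uᵀ * diagonal e * U) =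
      Uᵀ * diagonal (fun i => d i * e i) * U := by
    intro d e
    rw [← Matrix.diagonal_mul_diagonal]
    calc _ = Uᵀ * diagonal d * (U * Uᵀ) * diagonal e * U := by simp only [mul_assoc]
      _ = _ := by rw [hU', mul_one]; simp only [mul_assoc]
  let p : Fin n → ℝ := fun i => if x i = 0 then 0 else 1
  refine ⟨Uᵀ * diagonal p * U, ?_, ?_, ?_, ?_⟩
  · rw [hmul]
    congr 3
    ext i
    simp [p]
  · simp [Matrix.transpose_mul, mul_assoc]
  · rw [rank_conj _ _ hU, Matrix.rank_diagonal, ← card_of_pattern hk x σ hσ]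
    refine Fintype.card_congr (Equiv.subtypeEquivRight fun i => ?_)
    simp [p]
  · have hAf : Af (Uᵀ * diagonal p * U) (Uᵀ * diagonal x * U) =
        Uᵀ * diagonal (fun i => if x i = 0 then 1 else x i) * U := by
      unfold Af
      rw [hmul, hmul]
      conv_lhs => rw [← hU]
      rw [show Uᵀ * U = Uᵀ * diagonal (fun _ => (1 : ℝ)) * U by simp, ← sub_mul, ← mul_sub,
        ← add_mul, ← mul_add, Matrix.diagonal_sub, Matrix.diagonal_add]
      congr 3
      ext i
      by_cases h : x i = 0 <;> simp [p, h]
    have hpd : (Af (Uᵀ * diagonal p * U) (Uᵀ * diagonal x * U)).PosDef := by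
      rw [hAf]
      have hd : (diagonal (fun i => if x i = 0 then (1 : ℝ) else x i)).PosDef := by
        refine Matrix.PosDef.diagonal fun i => ?_
        have := nonneg_of_pattern x σ hσ i
        by_cases h : x i = 0
        · simp [h]
        · simpa [h] using lt_of_le_of_ne this (Ne.symm h)
      have := hd.conjTranspose_mul_mul_same (B := U) ?_
      · simpa using this
      · exact Matrix.mulVec_injective_of_isUnit ((Matrix.isUnit_iff_isUnit_det _).mpr (Matrix.isUnit_det_of_left_inverse hU))
    intro v hv
    have hv0 : v ≠ 0 := by
      rintro rfl
      simp at hv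
    simpa using hpd.dotProduct_mulVec_pos hv0

lemma manifold {n k : ℕ} (hk : k ≤ n) (X : Mat n) (hX : X.PosSemidef) (hr : X.rank = k) :
    IsCkManifoldAround (⊤ : ℕ∞) {X : Matrix (Fin n) (Fin n) ℝ | X.PosSemidef ∧ X.rank = k} X := by
  obtain ⟨P, hP, hPt, hPr, hXU⟩ := exists_proj hk X hX hr
  have hsubU : ∀ y ∈ Uset P, y - Ef P y ∈ Uset P := by
    intro y hy x hx
    rw [sub_eq_add_neg, Af_add hP _ _ (by rw [mul_neg, P_Ef hP, neg_zero])]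
    exact hy x hx
  refine ⟨Uset P, isOpen_Uset P, hXU, fun y => y - Ef P y, fun z => z + Ef P z, Fsub P,
    contDiffOn_id.sub (Ef_contDiff P), ?_, ?_, ?_⟩
  · refine ContDiffOn.mono (contDiffOn_id.add (Ef_contDiff P)) ?_
    rintro _ ⟨y, hy, rfl⟩
    exact hsubU y hy
  · intro y hy
    have : Ef P (y - Ef P y) = Ef P y := by
      rw [sub_eq_add_neg]
      exact Ef_add hP _ _ (by rw [mul_neg, P_Ef hP, neg_zero]) (by rw [neg_mul, Ef_P hP, neg_zero])
    simp only [this, sub_add_cancel]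
  · ext z
    constructor
    · rintro ⟨y, ⟨hyM, hyU⟩, rfl⟩
      exact ⟨(mem_iff hP hPt hPr hyU).mp hyM, y, hyU, rfl⟩
    · rintro ⟨hz, y, hyU, rfl⟩
      exact ⟨y, ⟨(mem_iff hP hPt hPr hyU).mpr hz, hyU⟩, rfl⟩

end PsdAux

/-- The set `M⁺_k` of positive semidefinite `n × n` matrices of rank `k` is the spectral lift
`λ⁻¹(M^sym)` of the set `M` of nonincreasing vectors with exactly `k` positive coordinates and
the rest zero, and it is a `C^∞` submanifold. -/
theorem psd_fixed_rank_manifold (n k : ℕ) (hk : k ≤ n) :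
    {X : Matrix (Fin n) (Fin n) ℝ | X.PosSemidef ∧ X.rank = k} =
      {X : Matrix (Fin n) (Fin n) ℝ | ∃ x : Fin n → ℝ,
        (∃ σ : Equiv.Perm (Fin n), Antitone (x ∘ σ) ∧
          ∀ i : Fin n, if (i : ℕ) < k then 0 < (x ∘ σ) i else (x ∘ σ) i = 0) ∧
        ∃ U : Matrix (Fin n) (Fin n) ℝ, Uᵀ * U = 1 ∧ X = Uᵀ * Matrix.diagonal x * U} ∧
    ∀ X ∈ {X : Matrix (Fin n) (Fin n) ℝ | X.PosSemidef ∧ X.rank = k},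
      IsCkManifoldAround (⊤ : ℕ∞) {X : Matrix (Fin n) (Fin n) ℝ | X.PosSemidef ∧ X.rank = k} X := by
  refine ⟨?_, fun X hX => PsdAux.manifold hk X hX.1 hX.2⟩
  ext X
  constructor
  · rintro ⟨h1, h2⟩
    exact PsdAux.exists_spec X h1 h2
  · rintro ⟨x, ⟨σ, -, hσ⟩, U, hU, rfl⟩
    exact PsdAux.of_spec hk x σ hσ U hU
end
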